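/- Let ℋ = ℋ_j ⊗ ℋ_i be a tensor product of two finite-dimensional complex Hilbert spaces, and let X, Y be operators on ℋ such that the partial trace of Y over the factor ℋ_i vanishes and X = X_j ⊗ I_i for some operator X_j on ℋ_j. Then for every real q ≥ 2, ‖X + Y‖_q² ≤ ‖X‖_q² + (q−1)·‖Y‖_q². -/

import Mathlib

/-!
Put `p = q - 2` and `s x = x * |x| ^ p`. All that is used of `X` and `Y` is that the real part of
`Tr (Yᴴ * X * (Xᴴ * X) ^ (p / 2))`, the derivative of `‖·‖_q ^ q / q` at `X` in the direction `Y`,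
vanishes; if `X = X_j ⊗ 1`, this matrix function of `X` has the same form, and the partial trace of
`Y` kills it.

Hermitian dilation reduces to Hermitian `X` and `Y` with `Re Tr (Y * s(X)) = 0`. Let
`N t = ‖X + t • Y‖_q`. By Hölder's inequality `N 0 ≤ N t`, and the increments of `N ^ 2` near `t`
are controlled by `Re Tr (Y * (s(X + t • Y) - s(X)))`. In the eigenbases of `X + t • Y` and `X`,
with eigenvalues `α i` and `β j`, this trace is a double sum over the divided differences of `s`,
which the Hermite–Hadamard inequality bounds by `p + 1` times a mean of `|α i| ^ p` and `|β j| ^ p`.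
Hölder's inequality for the doubly stochastic overlaps of the eigenbases (if `1 ≤ p`), or Jensen's
operator inequality for `x ↦ x ^ p` (if `p < 1`), then yields the bound
`(q - 1) * t * ‖Y‖_q ^ 2 * (N t) ^ p`. Hence `N t ^ 2 - (q - 1) * ‖Y‖_q ^ 2 * t ^ 2` grows by at
most a multiple of `(t - s) ^ 2` between `s` and `t`, and so it is antitone.
-/

open scoped Kronecker Matrix

/-- The Schatten `q`-norm `‖A‖_q = (Tr((AᴴA)^{q/2}))^{1/q}`, expressed through the
eigenvalues of `AᴴA` (the squared singular values of `A`). -/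
noncomputable def schattenNorm {n : Type*} [Fintype n] [DecidableEq n] (q : ℝ)
    (A : Matrix n n ℂ) : ℝ :=
  (∑ i, ((Matrix.isHermitian_conjTranspose_mul_self A).eigenvalues i) ^ (q / 2)) ^ (1 / q)

/-- The partial trace of an operator on `ℋ_j ⊗ ℋ_i` over the factor `ℋ_i`. -/
noncomputable def ptraceRight {J I : Type*} [Fintype I]
    (Y : Matrix (J × I) (J × I) ℂ) : Matrix J J ℂ :=
  Matrix.of fun a b => ∑ i : I, Y (a, i) (b, i)

section HermiteHadamard

open MeasureTheory Set

lemma integral_le_of_add_reflect_le {f : ℝ → ℝ} {a b c : ℝ} (hab : a ≤ b)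
    (hf : IntervalIntegrable f volume a b)
    (hc : ∀ x ∈ Icc a b, f x + f (a + b - x) ≤ 2 * c) :
    ∫ x in a..b, f x ≤ (b - a) * c := by
  have hf' : IntervalIntegrable (fun x ↦ f (a + b - x)) volume a b := by
    simpa using (hf.comp_sub_left (a + b)).symm
  have hreflect : ∫ x in a..b, f (a + b - x) = ∫ x in a..b, f x := by simp
  have hle := intervalIntegral.integral_mono_on hab (hf.add hf') intervalIntegrable_const hc
  rw [intervalIntegral.integral_add hf hf', hreflect, intervalIntegral.integral_const,
    smul_eq_mul] at hle
  linarith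

lemma integral_le_mul_midpoint_of_concaveOn {f : ℝ → ℝ} {a b : ℝ} (hab : a ≤ b)
    (hf : IntervalIntegrable f volume a b) (hconc : ConcaveOn ℝ (Icc a b) f) :
    ∫ x in a..b, f x ≤ (b - a) * f ((a + b) / 2) := by
  refine integral_le_of_add_reflect_le hab hf fun x hx ↦ ?_
  have hx' : a + b - x ∈ Icc a b := ⟨by linarith [hx.2], by linarith [hx.1]⟩
  have hmid := hconc.2 hx hx' one_half_pos.le one_half_pos.le (add_halves 1)
  simp only [smul_eq_mul] at hmid
  rw [show 1 / 2 * x + 1 / 2 * (a + b - x) = (a + b) / 2 by ring] at hmid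
  linarith

lemma integral_le_mul_average_of_convexOn {f : ℝ → ℝ} {a b : ℝ} (hab : a ≤ b)
    (hf : IntervalIntegrable f volume a b) (hconv : ConvexOn ℝ (Icc a b) f) :
    ∫ x in a..b, f x ≤ (b - a) * ((f a + f b) / 2) := by
  refine integral_le_of_add_reflect_le hab hf fun x hx ↦ ?_
  obtain ⟨s, t, hs, ht, hst, rfl⟩ := segment_eq_Icc hab ▸ hx
  have ha := Set.left_mem_Icc.2 hab
  have hb := Set.right_mem_Icc.2 hab
  have hle := hconv.2 ha hb hs ht hst
  have hle' := hconv.2 hb ha hs ht hst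
  have hreflect : a + b - (s • a + t • b) = s • b + t • a := by
    simp only [smul_eq_mul]
    linear_combination -(a + b) * hst
  rw [hreflect]
  calc f (s • a + t • b) + f (s • b + t • a) ≤ (s • f a + t • f b) + (s • f b + t • f a) := by
        gcongr
    _ = 2 * ((f a + f b) / 2) := by
        simp only [smul_eq_mul]
        linear_combination (f a + f b) * hst

end HermiteHadamard

section ScalarInequality

variable {p a b : ℝ}

/-- The upper Hermite–Hadamard bound for the average of `x ↦ x ^ p` over the interval between
`a` and `b`: the midpoint value in the concave range, the average of the end values otherwise. -/
noncomputable def hermiteHadamardMean (p a b : ℝ) : ℝ :=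
  if p < 1 then ((a + b) / 2) ^ p else (a ^ p + b ^ p) / 2

lemma hermiteHadamardMean_comm (p a b : ℝ) :
    hermiteHadamardMean p a b = hermiteHadamardMean p b a := by
  simp only [hermiteHadamardMean, add_comm]

lemma hermiteHadamardMean_self (p a : ℝ) : hermiteHadamardMean p a a = a ^ p := by
  simp [hermiteHadamardMean]

lemma rpow_add_one_sub_le (hp : 0 ≤ p) (hb : 0 ≤ b) (hab : b ≤ a) :
    a ^ (p + 1) - b ^ (p + 1) ≤ (p + 1) * ((a - b) * hermiteHadamardMean p a b) := by
  have hIcc : Set.Icc b a ⊆ Set.Ici 0 := fun x hx ↦ hb.trans hx.1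
  have hintegrable : IntervalIntegrable (fun x : ℝ ↦ x ^ p) MeasureTheory.volume b a :=
    intervalIntegral.intervalIntegrable_rpow' (by linarith)
  have hle : ∫ x in b..a, x ^ p ≤ (a - b) * hermiteHadamardMean p b a := by
    unfold hermiteHadamardMean
    split_ifs with hp1
    · exact integral_le_mul_midpoint_of_concaveOn hab hintegrable
        ((Real.concaveOn_rpow hp hp1.le).subset hIcc (convex_Icc b a))
    · exact integral_le_mul_average_of_convexOn hab hintegrable
        ((convexOn_rpow (not_lt.1 hp1)).subset hIcc (convex_Icc b a))
  rwa [integral_rpow (Or.inl (by linarith)), div_le_iff₀' (by linarith),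
    hermiteHadamardMean_comm] at hle

/-- The slope of the odd extension of `x ↦ x ^ (p + 1)` from `-b` to `a` is at most its slope from
`b` to `a`, so the bound for arguments of equal signs suffices. -/
lemma rpow_add_one_add_le (hp : 0 ≤ p) (hb : 0 ≤ b) (hab : b ≤ a) :
    a ^ (p + 1) + b ^ (p + 1) ≤ (p + 1) * ((a + b) * hermiteHadamardMean p a b) := by
  have ha : 0 ≤ a := hb.trans hab
  have hrpow {x : ℝ} (hx : 0 ≤ x) : x ^ (p + 1) = x ^ p * x :=
    Real.rpow_add_one' hx (by linarith)
  rcases hab.eq_or_lt with rfl | hlt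
  · rw [hermiteHadamardMean_self, hrpow hb]
    nlinarith [mul_nonneg hp (mul_nonneg (Real.rpow_nonneg hb p) hb)]
  · have hslope : (a ^ (p + 1) + b ^ (p + 1)) * (a - b)
        ≤ (a ^ (p + 1) - b ^ (p + 1)) * (a + b) := by
      rw [hrpow ha, hrpow hb]
      nlinarith [mul_le_mul_of_nonneg_right (Real.rpow_le_rpow hb hab hp) (mul_nonneg ha hb)]
    refine le_of_mul_le_mul_right (hslope.trans ?_) (sub_pos.2 hlt)
    calc _ ≤ (p + 1) * ((a - b) * hermiteHadamardMean p a b) * (a + b) :=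
          mul_le_mul_of_nonneg_right (rpow_add_one_sub_le hp hb hab) (add_nonneg ha hb)
      _ = _ := by ring

/-- The derivative of `x ↦ |x| ^ (p + 2) / (p + 2)`. Applied to a Hermitian matrix `A`, it gives
the functional that norms `A` in the Schatten `(p + 2)`-norm. -/
noncomputable def signedRpow (p x : ℝ) : ℝ := x * |x| ^ p

lemma signedRpow_neg (p x : ℝ) : signedRpow p (-x) = -signedRpow p x := by
  simp [signedRpow]

lemma signedRpow_of_nonneg (hp : 0 ≤ p) {x : ℝ} (hx : 0 ≤ x) : signedRpow p x = x ^ (p + 1) := by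
  rw [signedRpow, abs_of_nonneg hx, Real.rpow_add_one' hx (by linarith), mul_comm]

lemma abs_signedRpow (hp : 0 ≤ p) (x : ℝ) : |signedRpow p x| = |x| ^ (p + 1) := by
  rw [← signedRpow_of_nonneg hp (abs_nonneg x), signedRpow, signedRpow, abs_mul, abs_abs,
    abs_of_nonneg (Real.rpow_nonneg (abs_nonneg x) p)]

lemma mul_signedRpow_self (hp : 0 ≤ p) (x : ℝ) : x * signedRpow p x = |x| ^ (p + 2) := by
  rw [signedRpow, ← mul_assoc, ← abs_mul_abs_self, mul_comm, ← sq, ← Real.rpow_two,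
    Real.rpow_add' (abs_nonneg x) (by linarith)]

lemma sub_mul_signedRpow_sub_le (hp : 0 ≤ p) (a b : ℝ) :
    (a - b) * (signedRpow p a - signedRpow p b)
      ≤ (p + 1) * ((a - b) ^ 2 * hermiteHadamardMean p |a| |b|) := by
  wlog hab : |b| ≤ |a| generalizing a b
  · have hswap := this b a (le_of_not_ge hab)
    rw [hermiteHadamardMean_comm] at hswap
    linarith
  wlog ha : 0 ≤ a generalizing a b
  · have hneg := this (-a) (-b) (by simpa using hab) (by linarith)
    simp only [signedRpow_neg, abs_neg] at hneg
    linarith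
  rw [abs_of_nonneg ha] at hab ⊢
  rcases le_total 0 b with hb | hb
  · rw [abs_of_nonneg hb] at hab ⊢
    rw [signedRpow_of_nonneg hp ha, signedRpow_of_nonneg hp hb]
    linarith [mul_le_mul_of_nonneg_left (rpow_add_one_sub_le hp hb hab) (sub_nonneg.2 hab)]
  · rw [abs_of_nonpos hb] at hab ⊢
    have hb' : 0 ≤ -b := by linarith
    have hsigned : signedRpow p a - signedRpow p b = a ^ (p + 1) + (-b) ^ (p + 1) := by
      rw [← signedRpow_of_nonneg hp ha, ← signedRpow_of_nonneg hp hb', signedRpow_neg,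
        sub_eq_add_neg]
    rw [hsigned]
    linarith [mul_le_mul_of_nonneg_left (rpow_add_one_add_le hp hb' hab)
      (sub_nonneg.2 (hb.trans ha))]

end ScalarInequality

section Antitone

lemma antitoneOn_of_sub_le_mul_sq {S : Set ℝ} [S.OrdConnected] {g : ℝ → ℝ} {K : ℝ}
    (hg : ∀ s ∈ S, ∀ t ∈ S, s ≤ t → g t - g s ≤ K * (t - s) ^ 2) : AntitoneOn g S := by
  have hbisect (n : ℕ) : ∀ s ∈ S, ∀ t ∈ S, s ≤ t → g t - g s ≤ K * (t - s) ^ 2 / 2 ^ n := by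
    induction n with
    | zero => simpa using hg
    | succ n ih =>
      intro s hs t ht hst
      have hsm : s ≤ (s + t) / 2 := by linarith
      have hmt : (s + t) / 2 ≤ t := by linarith
      have hm : (s + t) / 2 ∈ S := Set.Icc_subset S hs ht ⟨hsm, hmt⟩
      calc g t - g s = (g t - g ((s + t) / 2)) + (g ((s + t) / 2) - g s) := by ring
        _ ≤ K * (t - (s + t) / 2) ^ 2 / 2 ^ n + K * ((s + t) / 2 - s) ^ 2 / 2 ^ n :=
            add_le_add (ih _ hm t ht hmt) (ih s hs _ hm hsm)
        _ = K * (t - s) ^ 2 / 2 ^ (n + 1) := by ring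
  intro s hs t ht hst
  have hlim : Filter.Tendsto (fun n : ℕ ↦ K * (t - s) ^ 2 / 2 ^ n) Filter.atTop (nhds 0) :=
    tendsto_const_nhds.div_atTop (tendsto_pow_atTop_atTop_of_one_lt one_lt_two)
  exact sub_nonpos.1 (ge_of_tendsto' hlim fun n ↦ hbisect n s hs t ht hst)

end Antitone

section DoublyStochastic

open Finset Matrix

variable {n : Type*} [Fintype n] [DecidableEq n] {w : Matrix n n ℝ} {x y : n → ℝ}

lemma sum_mul_rpow_mul_rpow_le_of_mem_doublyStochastic (hw : w ∈ doublyStochastic ℝ n)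
    (hx : ∀ i, 0 ≤ x i) (hy : ∀ j, 0 ≤ y j) {r s : ℝ} (hr : 0 < r) (hs : 0 ≤ s) :
    ∑ i, ∑ j, w i j * (x i ^ r * y j ^ s)
      ≤ (∑ i, x i ^ (r + s)) ^ (r / (r + s)) * (∑ j, y j ^ (r + s)) ^ (s / (r + s)) := by
  rcases hs.eq_or_lt with rfl | hs
  · simp [← sum_mul, sum_row_of_mem_doublyStochastic hw, hr.ne']
  set q := r + s with hq
  have hq0 : 0 < q := add_pos hr hs
  have hw0 (i j : n) : 0 ≤ w i j := nonneg_of_mem_doublyStochastic hw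
  have hconj : Real.HolderConjugate (q / r) (q / s) := by
    rw [Real.holderConjugate_iff]
    exact ⟨by rw [lt_div_iff₀ hr]; linarith, by field_simp; linarith⟩
  have hpow {t u v : ℝ} (ht : 0 < t) (hu : 0 ≤ u) (hv : 0 ≤ v) :
      (u ^ (t / q) * v ^ t) ^ (q / t) = u * v ^ q := by
    rw [Real.mul_rpow (by positivity) (by positivity), ← Real.rpow_mul hu, ← Real.rpow_mul hv,
      div_mul_div_cancel₀ hq0.ne', div_self ht.ne', mul_div_cancel₀ q ht.ne', Real.rpow_one]
  have hsplit (i j : n) :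
      w i j * (x i ^ r * y j ^ s) = w i j ^ (r / q) * x i ^ r * (w i j ^ (s / q) * y j ^ s) := by
    have hone : r / q + s / q = 1 := by rw [← add_div, ← hq, div_self hq0.ne']
    rw [mul_mul_mul_comm, ← Real.rpow_add' (hw0 i j) (by simp [hone]), hone, Real.rpow_one]
  have hholder := Real.inner_le_Lp_mul_Lq_of_nonneg (univ : Finset (n × n))
    (f := fun z ↦ w z.1 z.2 ^ (r / q) * x z.1 ^ r) (g := fun z ↦ w z.1 z.2 ^ (s / q) * y z.2 ^ s)
    hconj (fun z _ ↦ mul_nonneg (Real.rpow_nonneg (hw0 _ _) _) (Real.rpow_nonneg (hx _) _))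
    (fun z _ ↦ mul_nonneg (Real.rpow_nonneg (hw0 _ _) _) (Real.rpow_nonneg (hy _) _))
  simp only [hpow hr (hw0 _ _) (hx _), hpow hs (hw0 _ _) (hy _), ← hsplit, one_div_div,
    Fintype.sum_prod_type] at hholder
  rw [sum_comm (f := fun i j ↦ w i j * y j ^ q)] at hholder
  simpa only [← sum_mul, sum_row_of_mem_doublyStochastic hw, sum_col_of_mem_doublyStochastic hw,
    one_mul] using hholder

lemma sum_mulVec_rpow_le_of_mem_doublyStochastic (hw : w ∈ doublyStochastic ℝ n)
    (hx : ∀ i, 0 ≤ x i) {q : ℝ} (hq : 1 ≤ q) :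
    ∑ i, (w *ᵥ x) i ^ q ≤ ∑ j, x j ^ q :=
  calc ∑ i, (w *ᵥ x) i ^ q ≤ ∑ i, ∑ j, w i j * x j ^ q :=
        sum_le_sum fun i _ ↦ Real.rpow_arith_mean_le_arith_mean_rpow univ (w i) x
          (fun _ _ ↦ nonneg_of_mem_doublyStochastic hw)
          (sum_row_of_mem_doublyStochastic hw i) (fun j _ ↦ hx j) hq
    _ = ∑ j, x j ^ q := by
        rw [sum_comm]
        simp only [← sum_mul, sum_col_of_mem_doublyStochastic hw, one_mul]

end DoublyStochastic

section Compression

open Finset Matrix MeasureTheory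

lemma two_mul_re_mul_conj_sub_le {c : ℝ} (hc : 0 < c) (u z : ℂ) :
    2 * (star z * u).re - c * ‖z‖ ^ 2 ≤ ‖u‖ ^ 2 / c := by
  rw [le_div_iff₀ hc]
  have hre : (star z * u).re ≤ ‖z‖ * ‖u‖ := by
    simpa using Complex.re_le_norm (star z * u)
  nlinarith [sq_nonneg (‖u‖ - c * ‖z‖)]

variable {m n : Type*} [Fintype m] [Fintype n]

lemma sum_mul_rpowIntegrand₀₁ (p t : ℝ) (v d : m → ℝ) :
    ∑ i, v i * Real.rpowIntegrand₀₁ p t (d i)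
      = t ^ p * (t⁻¹ * ∑ i, v i - ∑ i, v i / (t + d i)) := by
  rw [mul_sum, ← sum_sub_distrib, mul_sum]
  refine sum_congr rfl fun i _ ↦ ?_
  rw [Real.rpowIntegrand₀₁]
  ring

lemma sum_mul_rpow_le_of_sum_div_le {v d : m → ℝ} {w μ : n → ℝ} (hd : ∀ i, 0 ≤ d i)
    (hμ : ∀ k, 0 ≤ μ k) (hsum : ∑ i, v i = ∑ k, w k)
    (hdiv : ∀ t > 0, ∑ k, w k / (t + μ k) ≤ ∑ i, v i / (t + d i)) {p : ℝ} (hp0 : 0 ≤ p)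
    (hp1 : p < 1) : ∑ i, v i * d i ^ p ≤ ∑ k, w k * μ k ^ p := by
  rcases hp0.eq_or_lt with rfl | hp0
  · simpa using hsum.le
  obtain ⟨ν, hν⟩ := Real.exists_measure_rpow_eq_integral_rpowIntegrand₀₁ ⟨hp0, hp1⟩
  have hintd (i : m) := ((hν (d i) (hd i)).1.integrable).const_mul (v i)
  have hintμ (k : n) := ((hν (μ k) (hμ k)).1.integrable).const_mul (w k)
  simp only [fun i ↦ (hν (d i) (hd i)).2, fun k ↦ (hν (μ k) (hμ k)).2, ← integral_const_mul]
  rw [← integral_finsetSum _ fun i _ ↦ hintd i, ← integral_finsetSum _ fun k _ ↦ hintμ k]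
  refine setIntegral_mono_on (integrable_finsetSum _ fun i _ ↦ hintd i)
    (integrable_finsetSum _ fun k _ ↦ hintμ k) measurableSet_Ioi fun t ht ↦ ?_
  rw [sum_mul_rpowIntegrand₀₁, sum_mul_rpowIntegrand₀₁, hsum]
  have ht0 : 0 ≤ t ^ p := Real.rpow_nonneg (le_of_lt ht) p
  gcongr
  exact hdiv t ht

variable [DecidableEq m] [DecidableEq n] {T : Matrix m n ℂ}

lemma sum_star_mulVec_mul_mulVec {d : m → ℂ} {μ : n → ℂ}
    (hT : Tᴴ * diagonal d * T = diagonal μ) (z b : n → ℂ) :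
    ∑ i, star ((T *ᵥ z) i) * (d i * (T *ᵥ b) i) = ∑ k, star (z k) * (μ k * b k) := by
  have h : star (T *ᵥ z) ⬝ᵥ (diagonal d *ᵥ (T *ᵥ b)) = star z ⬝ᵥ (diagonal μ *ᵥ b) := by
    rw [star_mulVec, ← hT, ← dotProduct_mulVec, mulVec_mulVec, mulVec_mulVec, Matrix.mul_assoc]
  simpa only [dotProduct, Pi.star_apply, mulVec_diagonal] using h

lemma sum_mul_norm_mulVec_sq {d : m → ℝ} {μ : n → ℝ}
    (hT : Tᴴ * diagonal (fun i ↦ (d i : ℂ)) * T = diagonal fun k ↦ (μ k : ℂ)) (b : n → ℂ) :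
    ∑ i, d i * ‖(T *ᵥ b) i‖ ^ 2 = ∑ k, μ k * ‖b k‖ ^ 2 := by
  have h := sum_star_mulVec_mul_mulVec hT b b
  simp only [Complex.star_def, mul_left_comm (starRingEnd ℂ _), Complex.conj_mul'] at h
  exact_mod_cast h

/-- Evaluate the variational formula `‖u‖² / c = max_z (2 Re (conj z * u) - c * ‖z‖²)` at the image
under `T` of the vector that is optimal for `μ`. -/
lemma sum_norm_sq_div_le_of_compression {d : m → ℝ} {μ : n → ℝ} (hd : ∀ i, 0 < d i)
    (hμ : ∀ k, 0 < μ k) (hT1 : Tᴴ * T = 1)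
    (hT : Tᴴ * diagonal (fun i ↦ (d i : ℂ)) * T = diagonal fun k ↦ (μ k : ℂ)) (b : n → ℂ) :
    ∑ k, ‖b k‖ ^ 2 / μ k ≤ ∑ i, ‖(T *ᵥ b) i‖ ^ 2 / d i := by
  set z : n → ℂ := fun k ↦ b k / μ k with hz
  have hinner : ∑ i, (star ((T *ᵥ z) i) * (T *ᵥ b) i).re = ∑ k, ‖b k‖ ^ 2 / μ k := by
    have h := sum_star_mulVec_mul_mulVec (d := 1) (μ := 1) (by simpa using hT1) z b
    simp only [Pi.one_apply, one_mul] at h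
    rw [← Complex.re_sum, h, Complex.re_sum]
    refine sum_congr rfl fun k _ ↦ ?_
    rw [hz, star_div₀, div_mul_eq_mul_div, Complex.star_def, Complex.conj_mul',
      Complex.conj_ofReal]
    norm_cast
  have hnorm : ∑ i, d i * ‖(T *ᵥ z) i‖ ^ 2 = ∑ k, ‖b k‖ ^ 2 / μ k := by
    rw [sum_mul_norm_mulVec_sq hT]
    refine sum_congr rfl fun k _ ↦ ?_
    rw [hz, norm_div, Complex.norm_of_nonneg (hμ k).le]
    field_simp [(hμ k).ne']
  calc ∑ k, ‖b k‖ ^ 2 / μ k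
      = ∑ i, (2 * (star ((T *ᵥ z) i) * (T *ᵥ b) i).re - d i * ‖(T *ᵥ z) i‖ ^ 2) := by
        rw [sum_sub_distrib, ← mul_sum, hinner, hnorm]
        ring
    _ ≤ _ := sum_le_sum fun i _ ↦ two_mul_re_mul_conj_sub_le (hd i) _ _

/-- Jensen's operator inequality for the operator concave function `x ↦ x ^ p`. -/
lemma sum_norm_mulVec_sq_mul_rpow_le_of_compression {d : m → ℝ} {μ : n → ℝ} (hd : ∀ i, 0 ≤ d i)
    (hμ : ∀ k, 0 ≤ μ k) (hT1 : Tᴴ * T = 1)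
    (hT : Tᴴ * diagonal (fun i ↦ (d i : ℂ)) * T = diagonal fun k ↦ (μ k : ℂ)) (b : n → ℂ)
    {p : ℝ} (hp0 : 0 ≤ p) (hp1 : p < 1) :
    ∑ i, ‖(T *ᵥ b) i‖ ^ 2 * d i ^ p ≤ ∑ k, ‖b k‖ ^ 2 * μ k ^ p := by
  refine sum_mul_rpow_le_of_sum_div_le hd hμ ?_ (fun t ht ↦ ?_) hp0 hp1
  · simpa using sum_mul_norm_mulVec_sq (T := T) (d := 1) (μ := 1) (by simpa using hT1) b
  · refine sum_norm_sq_div_le_of_compression (fun i ↦ add_pos_of_pos_of_nonneg ht (hd i))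
      (fun k ↦ add_pos_of_pos_of_nonneg ht (hμ k)) hT1 ?_ b
    simp only [Complex.ofReal_add, ← diagonal_add, Matrix.mul_add, Matrix.add_mul, hT]
    rw [← smul_one_eq_diagonal, ← smul_one_eq_diagonal, Matrix.mul_smul, Matrix.mul_one,
      Matrix.smul_mul, hT1]

end Compression

section SchattenNorm

open Finset Matrix Polynomial

variable {n : Type*} [Fintype n] [DecidableEq n] {A : Matrix n n ℂ} {q : ℝ}

lemma sum_eigenvalues_of_charpoly_eq {m : Type*} [Fintype m] (hA : A.IsHermitian) {β : m → ℝ}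
    (h : A.charpoly = ∏ i, (X - C (β i : ℂ))) (f : ℝ → ℝ) :
    ∑ i, f (hA.eigenvalues i) = ∑ i, f (β i) := by
  have hroots := hA.roots_charpoly_eq_eigenvalues
  have hprod : ∏ i, (X - C (β i : ℂ)) ≠ 0 := prod_ne_zero_iff.2 fun i _ ↦ X_sub_C_ne_zero _
  rw [h, roots_prod _ _ hprod] at hroots
  simpa [Multiset.map_map, Function.comp_def] using
    (congrArg (fun s : Multiset ℂ ↦ (s.map fun z ↦ f z.re).sum) hroots).symm

lemma schattenNorm_of_charpoly_eq {m : Type*} [Fintype m] {β : m → ℝ}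
    (h : (Aᴴ * A).charpoly = ∏ i, (X - C (β i : ℂ))) (q : ℝ) :
    schattenNorm q A = (∑ i, β i ^ (q / 2)) ^ (1 / q) := by
  rw [schattenNorm, sum_eigenvalues_of_charpoly_eq _ h fun x ↦ x ^ (q / 2)]

lemma schattenNorm_nonneg (q : ℝ) (A : Matrix n n ℂ) : 0 ≤ schattenNorm q A :=
  Real.rpow_nonneg (sum_nonneg fun i _ ↦
    Real.rpow_nonneg (eigenvalues_conjTranspose_mul_self_nonneg A i) _) _

lemma schattenNorm_smul (hq : q ≠ 0) (c : ℂ) (A : Matrix n n ℂ) :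
    schattenNorm q (c • A) = ‖c‖ * schattenNorm q A := by
  have hA := isHermitian_conjTranspose_mul_self A
  have hα (i : n) : 0 ≤ hA.eigenvalues i := eigenvalues_conjTranspose_mul_self_nonneg A i
  have hcfc : (c • A)ᴴ * (c • A) = cfc (fun x : ℝ ↦ ‖c‖ ^ 2 * x) (Aᴴ * A) := by
    rw [cfc_const_mul_id _ _ hA.isSelfAdjoint, conjTranspose_smul, smul_mul_smul_comm,
      Complex.star_def, Complex.conj_mul', ← Complex.ofReal_pow, Complex.coe_smul]
  have hterm (i : n) : (‖c‖ ^ 2 * hA.eigenvalues i) ^ (q / 2)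
      = ‖c‖ ^ q * hA.eigenvalues i ^ (q / 2) := by
    rw [Real.mul_rpow (by positivity) (hα i), ← Real.rpow_two, ← Real.rpow_mul (norm_nonneg c),
      mul_div_cancel₀ q two_ne_zero]
  calc schattenNorm q (c • A)
      = (∑ i, (‖c‖ ^ 2 * hA.eigenvalues i) ^ (q / 2)) ^ (1 / q) :=
        schattenNorm_of_charpoly_eq (by rw [hcfc]; exact hA.charpoly_cfc_eq _) q
    _ = (‖c‖ ^ q * ∑ i, hA.eigenvalues i ^ (q / 2)) ^ (1 / q) := by
        rw [mul_sum, sum_congr rfl fun i _ ↦ hterm i]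
    _ = ‖c‖ * (∑ i, hA.eigenvalues i ^ (q / 2)) ^ (1 / q) := by
        rw [Real.mul_rpow (by positivity) (sum_nonneg fun i _ ↦ Real.rpow_nonneg (hα i) _),
          one_div, Real.rpow_rpow_inv (norm_nonneg c) hq]

lemma schattenNorm_rpow_of_isHermitian (hA : A.IsHermitian) (q r : ℝ) :
    schattenNorm q A ^ r = (∑ i, |hA.eigenvalues i| ^ q) ^ (r / q) := by
  have hcfc : Aᴴ * A = cfc (fun x : ℝ ↦ x * x) A := by
    rw [cfc_mul (fun x : ℝ ↦ x) (fun x ↦ x) A, cfc_id' ℝ A hA.isSelfAdjoint, hA.eq]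
  have hterm (x : ℝ) : (x * x) ^ (q / 2) = |x| ^ q := by
    rw [← abs_mul_abs_self, ← sq, ← Real.rpow_two, ← Real.rpow_mul (abs_nonneg x),
      mul_div_cancel₀ q two_ne_zero]
  rw [schattenNorm_of_charpoly_eq (β := fun i ↦ hA.eigenvalues i * hA.eigenvalues i)
    (hcfc ▸ hA.charpoly_cfc_eq _), ← Real.rpow_mul]
  · simp only [hterm, one_div_mul_eq_div]
  · exact sum_nonneg fun i _ ↦ Real.rpow_nonneg (mul_self_nonneg _) _

end SchattenNorm

section EigenWeight

open Finset Matrix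

variable {n : Type*} [Fintype n] [DecidableEq n] {A B C : Matrix n n ℂ}

/-- The squared moduli of the entries of `C` with respect to the eigenbases of the Hermitian
matrices `A` (rows) and `B` (columns). The weights of `C = 1` are the squared overlaps of the two
eigenbases. -/
noncomputable def eigenWeight (hA : A.IsHermitian) (hB : B.IsHermitian) (C : Matrix n n ℂ) :
    Matrix n n ℝ :=
  of fun i j ↦ ‖((hA.eigenvectorUnitary : Matrix n n ℂ)ᴴ * C * hB.eigenvectorUnitary) i j‖ ^ 2

lemma eigenWeight_conjTranspose (hA : A.IsHermitian) (hB : B.IsHermitian) (C : Matrix n n ℂ) :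
    eigenWeight hA hB Cᴴ = (eigenWeight hB hA C)ᵀ := by
  ext i j
  rw [transpose_apply, eigenWeight, eigenWeight, of_apply, of_apply, ← norm_star,
    ← conjTranspose_apply]
  simp only [conjTranspose_mul, conjTranspose_conjTranspose, Matrix.mul_assoc]

lemma trace_diagonal_mul_mul_diagonal_mul_conjTranspose (f g : n → ℝ) (Z : Matrix n n ℂ) :
    trace (diagonal (fun i ↦ (f i : ℂ)) * Z * diagonal (fun j ↦ (g j : ℂ)) * Zᴴ)
      = ((∑ i, ∑ j, ‖Z i j‖ ^ 2 * (f i * g j) : ℝ) : ℂ) := by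
  push_cast
  simp only [trace, diag_apply, mul_apply (N := Zᴴ), mul_diagonal, diagonal_mul,
    conjTranspose_apply, ← Complex.mul_conj', Complex.star_def]
  exact sum_congr rfl fun i _ ↦ sum_congr rfl fun j _ ↦ by ring

lemma trace_cfc_mul_mul_cfc_mul_conjTranspose (hA : A.IsHermitian) (hB : B.IsHermitian)
    (C : Matrix n n ℂ) (f g : ℝ → ℝ) :
    trace (cfc f A * C * cfc g B * Cᴴ)
      = ((∑ i, ∑ j, eigenWeight hA hB C i j * (f (hA.eigenvalues i) * g (hB.eigenvalues j)) : ℝ)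
        : ℂ) := by
  simp only [eigenWeight, of_apply]
  rw [← trace_diagonal_mul_mul_diagonal_mul_conjTranspose (fun i ↦ f (hA.eigenvalues i))
    (fun j ↦ g (hB.eigenvalues j)), hA.cfc_eq, hB.cfc_eq, IsHermitian.cfc, IsHermitian.cfc,
    Unitary.conjStarAlgAut_apply, Unitary.conjStarAlgAut_apply]
  simp only [conjTranspose_mul, conjTranspose_conjTranspose, Matrix.mul_assoc,
    star_eq_conjTranspose]
  rw [trace_mul_comm]
  simp only [Matrix.mul_assoc]
  rfl

lemma eigenWeight_one_mem_doublyStochastic (hA : A.IsHermitian) (hB : B.IsHermitian) :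
    eigenWeight hA hB 1 ∈ doublyStochastic ℝ n := by
  have hrow {A B : Matrix n n ℂ} (hA : A.IsHermitian) (hB : B.IsHermitian) (i : n) :
      ∑ j, eigenWeight hA hB 1 i j = 1 := by
    set P := star hA.eigenvectorUnitary * hB.eigenvectorUnitary
    have hunit : ((P : Matrix n n ℂ) * (P : Matrix n n ℂ)ᴴ) i i = 1 := by
      rw [← star_eq_conjTranspose, mem_unitaryGroup_iff.1 P.2, one_apply_eq]
    simp only [mul_apply, conjTranspose_apply, Complex.star_def, Complex.mul_conj'] at hunit
    simp only [eigenWeight, Matrix.mul_one, of_apply]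
    exact_mod_cast hunit
  refine mem_doublyStochastic_iff_sum.2 ⟨fun i j ↦ sq_nonneg _, hrow hA hB, fun j ↦ ?_⟩
  rw [← hrow hB hA j, ← conjTranspose_one, eigenWeight_conjTranspose]
  simp

lemma mul_eigenvectorUnitary (hA : A.IsHermitian) :
    A * (hA.eigenvectorUnitary : Matrix n n ℂ)
      = hA.eigenvectorUnitary * diagonal fun i ↦ (hA.eigenvalues i : ℂ) := by
  have h := congrArg (· * (hA.eigenvectorUnitary : Matrix n n ℂ)) hA.spectral_theorem
  simp only [Unitary.conjStarAlgAut_apply, Matrix.mul_assoc,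
    mem_unitaryGroup_iff'.1 hA.eigenvectorUnitary.2, Matrix.mul_one] at h
  exact h

lemma eigenWeight_sub (hA : A.IsHermitian) (hB : B.IsHermitian) (i j : n) :
    eigenWeight hA hB (A - B) i j
      = (hA.eigenvalues i - hB.eigenvalues j) ^ 2 * eigenWeight hA hB 1 i j := by
  set U := (hA.eigenvectorUnitary : Matrix n n ℂ)
  set V := (hB.eigenvectorUnitary : Matrix n n ℂ)
  have hUA : Uᴴ * A = diagonal (fun i ↦ (hA.eigenvalues i : ℂ)) * Uᴴ := by
    have h := congrArg conjTranspose (mul_eigenvectorUnitary hA)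
    rw [conjTranspose_mul, conjTranspose_mul, diagonal_conjTranspose, hA.eq] at h
    simpa [Pi.star_def] using h
  have hentry : (Uᴴ * (A - B) * V) i j
      = ((hA.eigenvalues i - hB.eigenvalues j : ℝ) : ℂ) * (Uᴴ * V) i j := by
    rw [Matrix.mul_sub, Matrix.sub_mul, hUA, Matrix.mul_assoc Uᴴ B, mul_eigenvectorUnitary hB,
      ← Matrix.mul_assoc, Matrix.mul_assoc, Matrix.sub_apply, diagonal_mul, mul_diagonal]
    push_cast
    ring
  rw [eigenWeight, of_apply, hentry, norm_mul, mul_pow, Complex.norm_real, Real.norm_eq_abs,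
    sq_abs, eigenWeight, of_apply, Matrix.mul_one]

end EigenWeight

section TracePairing

open Finset Matrix

variable {n : Type*} [Fintype n] [DecidableEq n] {A B : Matrix n n ℂ} {p : ℝ}

lemma cfc_self_mul_of_isHermitian (hA : A.IsHermitian) (f : ℝ → ℝ) :
    cfc (fun x ↦ x * f x) A = A * cfc f A := by
  rw [cfc_mul (fun x ↦ x) f A (hg := finite_real_spectrum.continuousOn f),
    cfc_id' ℝ A hA.isSelfAdjoint]

lemma trace_mul_cfc (hA : A.IsHermitian) (hB : B.IsHermitian) (g : ℝ → ℝ) :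
    trace (A * cfc g B) = ((∑ i, ∑ j, eigenWeight hA hB 1 i j *
      (hA.eigenvalues i * g (hB.eigenvalues j)) : ℝ) : ℂ) := by
  simpa [cfc_id' ℝ A hA.isSelfAdjoint] using
    trace_cfc_mul_mul_cfc_mul_conjTranspose hA hB 1 (fun x ↦ x) g

lemma trace_cfc (hA : A.IsHermitian) (f : ℝ → ℝ) :
    trace (cfc f A) = ((∑ i, f (hA.eigenvalues i) : ℝ) : ℂ) := by
  rw [hA.cfc_eq, IsHermitian.cfc, Unitary.conjStarAlgAut_apply, trace_mul_cycle,
    mem_unitaryGroup_iff'.1 hA.eigenvectorUnitary.2, Matrix.one_mul, trace_diagonal]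
  simp

lemma re_trace_mul_cfc_signedRpow_self (hA : A.IsHermitian) (hp : 0 ≤ p) :
    (trace (A * cfc (signedRpow p) A)).re = schattenNorm (p + 2) A ^ (p + 2) := by
  have hq : p + 2 ≠ 0 := by positivity
  rw [← cfc_self_mul_of_isHermitian hA, trace_cfc hA, Complex.ofReal_re,
    schattenNorm_rpow_of_isHermitian hA, div_self hq, Real.rpow_one]
  simp only [mul_signedRpow_self hp]

lemma re_trace_mul_cfc_signedRpow_le (hA : A.IsHermitian) (hB : B.IsHermitian) (hp : 0 ≤ p) :
    (trace (A * cfc (signedRpow p) B)).re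
      ≤ schattenNorm (p + 2) A * schattenNorm (p + 2) B ^ (p + 1) := by
  have hholder := sum_mul_rpow_mul_rpow_le_of_mem_doublyStochastic
    (eigenWeight_one_mem_doublyStochastic hA hB) (fun i ↦ abs_nonneg (hA.eigenvalues i))
    (fun j ↦ abs_nonneg (hB.eigenvalues j)) one_pos (by positivity : 0 ≤ p + 1)
  rw [show 1 + (p + 1) = p + 2 by ring, ← schattenNorm_rpow_of_isHermitian hA,
    ← schattenNorm_rpow_of_isHermitian hB, Real.rpow_one] at hholder
  rw [trace_mul_cfc hA hB, Complex.ofReal_re]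
  refine le_trans (sum_le_sum fun i _ ↦ sum_le_sum fun j _ ↦ ?_) hholder
  refine mul_le_mul_of_nonneg_left ?_ (sq_nonneg _)
  rw [Real.rpow_one, ← abs_signedRpow hp, ← abs_mul]
  exact le_abs_self _

lemma trace_sub_mul_cfc_sub_cfc (hA : A.IsHermitian) (hB : B.IsHermitian) (f : ℝ → ℝ) :
    trace ((A - B) * (cfc f A - cfc f B)) = ((∑ i, ∑ j, eigenWeight hA hB 1 i j *
      ((hA.eigenvalues i - hB.eigenvalues j) * (f (hA.eigenvalues i) - f (hB.eigenvalues j))) : ℝ)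
        : ℂ) := by
  have hAA := trace_cfc_mul_mul_cfc_mul_conjTranspose hA hB 1 (fun x ↦ x * f x) fun _ ↦ 1
  have hBA := trace_cfc_mul_mul_cfc_mul_conjTranspose hA hB 1 f fun x ↦ x
  have hBB := trace_cfc_mul_mul_cfc_mul_conjTranspose hA hB 1 (fun _ ↦ 1) fun x ↦ x * f x
  simp only [conjTranspose_one, cfc_self_mul_of_isHermitian hA, cfc_self_mul_of_isHermitian hB,
    cfc_const_one ℝ A, cfc_const_one ℝ B, cfc_id' ℝ B hB.isSelfAdjoint, mul_one, one_mul]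
    at hAA hBA hBB
  rw [Matrix.sub_mul, Matrix.mul_sub, Matrix.mul_sub, trace_sub, trace_sub, trace_sub, hAA,
    trace_mul_cfc hA hB, trace_mul_comm B, hBA, hBB]
  norm_cast
  simp only [← sum_sub_distrib]
  exact sum_congr rfl fun i _ ↦ sum_congr rfl fun j _ ↦ by ring

end TracePairing

section ColKronecker

open Finset Matrix

variable {m n : Type*}

/-- The matrix with columns `P_k ⊗ conj Q_k`, which represents `c ↦ P * diagonal c * Qᴴ` as a linear
map from diagonals to matrices. -/
def colKronecker (P Q : Matrix m n ℂ) : Matrix (m × m) n ℂ :=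
  of fun x k ↦ P x.1 k * star (Q x.2 k)

lemma colKronecker_mulVec [Fintype n] [DecidableEq n] (P Q : Matrix m n ℂ) (c : n → ℂ)
    (x : m × m) :
    (colKronecker P Q *ᵥ c) x = (P * diagonal c * Qᴴ) x.1 x.2 := by
  rw [mul_apply]
  simp only [colKronecker, mulVec, dotProduct, of_apply, mul_diagonal, conjTranspose_apply]
  exact sum_congr rfl fun k _ ↦ by ring

variable [Fintype m]

lemma conjTranspose_colKronecker_mul_diagonal_mul [DecidableEq m] (P Q : Matrix m n ℂ)
    (a b : m → ℂ) (k l : n) :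
    ((colKronecker P Q)ᴴ * diagonal (fun x : m × m ↦ a x.1 * b x.2) * colKronecker P Q) k l
      = (Pᴴ * diagonal a * P) k l * (Qᴴ * diagonal b * Q) l k := by
  rw [mul_apply, mul_apply, mul_apply, sum_mul_sum, Fintype.sum_prod_type]
  simp only [colKronecker, mul_diagonal, conjTranspose_apply, of_apply, star_mul', star_star]
  exact sum_congr rfl fun i _ ↦ sum_congr rfl fun j _ ↦ by ring

lemma conjTranspose_mul_diagonal_mul_apply_self [DecidableEq m] (P : Matrix m n ℂ) (a : m → ℝ)
    (k : n) :
    (Pᴴ * diagonal (fun i ↦ (a i : ℂ)) * P) k k = ((∑ i, ‖P i k‖ ^ 2 * a i : ℝ) : ℂ) := by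
  rw [mul_apply]
  push_cast
  simp only [mul_diagonal, conjTranspose_apply, Complex.star_def, ← Complex.conj_mul']
  exact sum_congr rfl fun i _ ↦ by ring

lemma conjTranspose_colKronecker_mul_self [DecidableEq n] {P Q : Matrix m n ℂ} (hP : Pᴴ * P = 1)
    (hQ : Qᴴ * Q = 1) : (colKronecker P Q)ᴴ * colKronecker P Q = 1 := by
  classical
  ext k l
  have h := conjTranspose_colKronecker_mul_diagonal_mul P Q 1 1 k l
  have hone : (diagonal 1 : Matrix m m ℂ) = 1 := diagonal_one
  simp only [Pi.one_apply, mul_one, diagonal_one, hone, Matrix.mul_one, hP, hQ] at h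
  rw [h]
  by_cases hkl : k = l <;> simp [hkl, one_apply, eq_comm]

lemma colKronecker_compression [DecidableEq m] [DecidableEq n] {P Q : Matrix m n ℂ}
    (hP : Pᴴ * P = 1) (hQ : Qᴴ * Q = 1) (a b : m → ℝ) :
    (colKronecker P Q)ᴴ * diagonal (fun x : m × m ↦ (((a x.1 + b x.2) / 2 : ℝ) : ℂ))
        * colKronecker P Q
      = diagonal fun k ↦
          (((∑ i, ‖P i k‖ ^ 2 * a i + ∑ j, ‖Q j k‖ ^ 2 * b j) / 2 : ℝ) : ℂ) := by
  ext k l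
  have ha := conjTranspose_colKronecker_mul_diagonal_mul P Q (fun i ↦ (a i : ℂ)) 1 k l
  have hb := conjTranspose_colKronecker_mul_diagonal_mul P Q 1 (fun j ↦ (b j : ℂ)) k l
  have hsplit : diagonal (fun x : m × m ↦ (((a x.1 + b x.2) / 2 : ℝ) : ℂ))
      = (2⁻¹ : ℂ) • (diagonal (fun x : m × m ↦ (a x.1 : ℂ) * (1 : m → ℂ) x.2)
        + diagonal fun x : m × m ↦ (1 : m → ℂ) x.1 * (b x.2 : ℂ)) := by
    rw [diagonal_add, ← diagonal_smul]
    congr 1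
    ext x
    simp [div_eq_inv_mul]
  rw [hsplit, Matrix.mul_smul, Matrix.smul_mul, Matrix.mul_add, Matrix.add_mul,
    Matrix.smul_apply, Matrix.add_apply, ha, hb]
  have hone : (diagonal 1 : Matrix m m ℂ) = 1 := diagonal_one
  simp only [hone, Matrix.mul_one, hP, hQ]
  rcases eq_or_ne k l with rfl | hkl
  · simp only [one_apply_eq, diagonal_apply_eq, conjTranspose_mul_diagonal_mul_apply_self]
    push_cast
    simp [div_eq_inv_mul]
  · simp [hkl, hkl.symm]

end ColKronecker

section KeyEstimate

open Finset Matrix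

variable {n : Type*} [Fintype n] [DecidableEq n] {A B C : Matrix n n ℂ} {p R : ℝ}

lemma sum_eigenWeight_mul_right (hA : A.IsHermitian) (hB : B.IsHermitian) (hC : C.IsHermitian)
    (g : ℝ → ℝ) :
    ∑ i, ∑ j, eigenWeight hA hB C i j * g (hB.eigenvalues j)
      = ∑ k, ∑ j, eigenWeight hC hB 1 k j * (hC.eigenvalues k ^ 2 * g (hB.eigenvalues j)) := by
  have hAB := trace_cfc_mul_mul_cfc_mul_conjTranspose hA hB C (fun _ ↦ 1) g
  have hCB := trace_cfc_mul_mul_cfc_mul_conjTranspose hC hB 1 (fun x ↦ x ^ 2) g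
  have htrace : trace (C * cfc g B * C) = trace (C ^ 2 * cfc g B) := by
    rw [trace_mul_comm, ← Matrix.mul_assoc, sq]
  simp only [conjTranspose_one, Matrix.mul_one, cfc_const_one ℝ A, hC.eq,
    cfc_pow_id C 2 hC.isSelfAdjoint, one_mul] at hAB hCB
  exact_mod_cast hAB.symm.trans (htrace.trans hCB)

lemma sum_eigenWeight_mul_abs_rpow_right_le (hA : A.IsHermitian) (hB : B.IsHermitian)
    (hC : C.IsHermitian) (hp : 0 ≤ p) :
    ∑ i, ∑ j, eigenWeight hA hB C i j * |hB.eigenvalues j| ^ p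
      ≤ schattenNorm (p + 2) C ^ 2 * schattenNorm (p + 2) B ^ p := by
  have hholder := sum_mul_rpow_mul_rpow_le_of_mem_doublyStochastic
    (eigenWeight_one_mem_doublyStochastic hC hB) (fun i ↦ abs_nonneg (hC.eigenvalues i))
    (fun j ↦ abs_nonneg (hB.eigenvalues j)) two_pos hp
  rw [add_comm 2 p, ← schattenNorm_rpow_of_isHermitian hC, ← schattenNorm_rpow_of_isHermitian hB]
    at hholder
  simpa only [sum_eigenWeight_mul_right hA hB hC fun x ↦ |x| ^ p, Real.rpow_two, sq_abs]
    using hholder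

lemma sum_eigenWeight_mul_abs_rpow_left_le (hA : A.IsHermitian) (hB : B.IsHermitian)
    (hC : C.IsHermitian) (hp : 0 ≤ p) :
    ∑ i, ∑ j, eigenWeight hA hB C i j * |hA.eigenvalues i| ^ p
      ≤ schattenNorm (p + 2) C ^ 2 * schattenNorm (p + 2) A ^ p := by
  have hle := sum_eigenWeight_mul_abs_rpow_right_le hB hA hC hp
  have htranspose : eigenWeight hB hA C = (eigenWeight hA hB C)ᵀ := by
    rw [← eigenWeight_conjTranspose, hC.eq]
  rwa [htranspose, sum_comm] at hle

lemma eigenWeight_one_mulVec (hA : A.IsHermitian) (hB : B.IsHermitian) (x : n → ℝ) (i : n) :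
    (eigenWeight hA hB 1 *ᵥ x) i = ∑ j,
      ‖((hB.eigenvectorUnitary : Matrix n n ℂ)ᴴ * hA.eigenvectorUnitary) j i‖ ^ 2 * x j := by
  rw [← conjTranspose_one, eigenWeight_conjTranspose]
  simp [mulVec, dotProduct, eigenWeight]

lemma sum_eigenWeight_mul_midpoint_rpow_le_sum (hA : A.IsHermitian) (hB : B.IsHermitian)
    (hC : C.IsHermitian) (hp0 : 0 ≤ p) (hp1 : p < 1) :
    ∑ i, ∑ j, eigenWeight hA hB C i j * ((|hA.eigenvalues i| + |hB.eigenvalues j|) / 2) ^ p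
      ≤ ∑ k, |hC.eigenvalues k| ^ 2
        * (((eigenWeight hC hA 1 *ᵥ fun i ↦ |hA.eigenvalues i|) k
          + (eigenWeight hC hB 1 *ᵥ fun j ↦ |hB.eigenvalues j|) k) / 2) ^ p := by
  set P := (hA.eigenvectorUnitary : Matrix n n ℂ)ᴴ * hC.eigenvectorUnitary with hPdef
  set Q := (hB.eigenvectorUnitary : Matrix n n ℂ)ᴴ * hC.eigenvectorUnitary with hQdef
  have hP : Pᴴ * P = 1 :=
    mem_unitaryGroup_iff'.1 (star hA.eigenvectorUnitary * hC.eigenvectorUnitary).2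
  have hQ : Qᴴ * Q = 1 :=
    mem_unitaryGroup_iff'.1 (star hB.eigenvectorUnitary * hC.eigenvectorUnitary).2
  have hUC : (hC.eigenvectorUnitary : Matrix n n ℂ) * (hC.eigenvectorUnitary : Matrix n n ℂ)ᴴ = 1 :=
    mem_unitaryGroup_iff.1 hC.eigenvectorUnitary.2
  have hC_coord : (hA.eigenvectorUnitary : Matrix n n ℂ)ᴴ * C * hB.eigenvectorUnitary
      = P * diagonal (fun k ↦ (hC.eigenvalues k : ℂ)) * Qᴴ := by
    rw [hPdef, hQdef, conjTranspose_mul, conjTranspose_conjTranspose,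
      Matrix.mul_assoc _ _ (diagonal _), ← mul_eigenvectorUnitary hC]
    simp only [Matrix.mul_assoc]
    rw [← Matrix.mul_assoc _ (hC.eigenvectorUnitary : Matrix n n ℂ)ᴴ, hUC, Matrix.one_mul]
  have hle := sum_norm_mulVec_sq_mul_rpow_le_of_compression (fun x ↦ by positivity)
    (fun k ↦ by positivity) (conjTranspose_colKronecker_mul_self hP hQ)
    (colKronecker_compression hP hQ (fun i ↦ |hA.eigenvalues i|) fun j ↦ |hB.eigenvalues j|)
    (fun k ↦ (hC.eigenvalues k : ℂ)) hp0 hp1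
  simp only [colKronecker_mulVec, ← hC_coord, Complex.norm_real, Real.norm_eq_abs,
    Fintype.sum_prod_type] at hle
  simp only [eigenWeight_one_mulVec]
  exact hle

lemma sum_average_mulVec_rpow_le {w v : Matrix n n ℝ} (hw : w ∈ doublyStochastic ℝ n)
    (hv : v ∈ doublyStochastic ℝ n) {x y : n → ℝ} (hx : ∀ i, 0 ≤ x i) (hy : ∀ i, 0 ≤ y i) {q S : ℝ}
    (hq : 1 ≤ q) (hxS : ∑ i, x i ^ q ≤ S) (hyS : ∑ i, y i ^ q ≤ S) :
    ∑ k, (((w *ᵥ x) k + (v *ᵥ y) k) / 2) ^ q ≤ S := by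
  have hconvex (k : n) : (((w *ᵥ x) k + (v *ᵥ y) k) / 2) ^ q
      ≤ ((w *ᵥ x) k ^ q + (v *ᵥ y) k ^ q) / 2 := by
    have hwx : 0 ≤ (w *ᵥ x) k :=
      sum_nonneg fun i _ ↦ mul_nonneg (nonneg_of_mem_doublyStochastic hw) (hx i)
    have hvy : 0 ≤ (v *ᵥ y) k :=
      sum_nonneg fun i _ ↦ mul_nonneg (nonneg_of_mem_doublyStochastic hv) (hy i)
    have hmid : ((w *ᵥ x) k + (v *ᵥ y) k) / 2 = 2⁻¹ * (w *ᵥ x) k + 2⁻¹ * (v *ᵥ y) k := by ring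
    have h := (convexOn_rpow hq).2 hwx hvy (by norm_num : (0 : ℝ) ≤ 2⁻¹)
      (by norm_num : (0 : ℝ) ≤ 2⁻¹) (by norm_num)
    rw [hmid]
    simp only [smul_eq_mul] at h
    linarith
  have hsum := sum_le_sum fun k (_ : k ∈ univ) ↦ hconvex k
  rw [← sum_div, sum_add_distrib] at hsum
  linarith [sum_mulVec_rpow_le_of_mem_doublyStochastic hw hx hq,
    sum_mulVec_rpow_le_of_mem_doublyStochastic hv hy hq]

lemma sum_abs_eigenvalues_rpow_le (hA : A.IsHermitian) (hp : 0 ≤ p)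
    (hAR : schattenNorm (p + 2) A ≤ R) : ∑ i, |hA.eigenvalues i| ^ (p + 2) ≤ R ^ (p + 2) := by
  have hq : p + 2 ≠ 0 := by positivity
  have h := schattenNorm_rpow_of_isHermitian hA (p + 2) (p + 2)
  rw [div_self hq, Real.rpow_one] at h
  rw [← h]
  exact Real.rpow_le_rpow (schattenNorm_nonneg _ _) hAR (by positivity)

lemma sum_eigenWeight_mul_midpoint_rpow_le (hA : A.IsHermitian) (hB : B.IsHermitian)
    (hC : C.IsHermitian) (hp0 : 0 ≤ p) (hp1 : p < 1) (hAR : schattenNorm (p + 2) A ≤ R)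
    (hBR : schattenNorm (p + 2) B ≤ R) :
    ∑ i, ∑ j, eigenWeight hA hB C i j * ((|hA.eigenvalues i| + |hB.eigenvalues j|) / 2) ^ p
      ≤ schattenNorm (p + 2) C ^ 2 * R ^ p := by
  have hR : 0 ≤ R := (schattenNorm_nonneg _ _).trans hAR
  set μ : n → ℝ := fun k ↦ ((eigenWeight hC hA 1 *ᵥ fun i ↦ |hA.eigenvalues i|) k
    + (eigenWeight hC hB 1 *ᵥ fun j ↦ |hB.eigenvalues j|) k) / 2
  have hμ (k : n) : 0 ≤ μ k := by
    have (D : Matrix n n ℂ) (hD : D.IsHermitian) :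
        0 ≤ (eigenWeight hC hD 1 *ᵥ fun i ↦ |hD.eigenvalues i|) k :=
      sum_nonneg fun i _ ↦ mul_nonneg (sq_nonneg _) (abs_nonneg _)
    exact div_nonneg (add_nonneg (this A hA) (this B hB)) two_pos.le
  have hμR : ∑ k, μ k ^ (p + 2) ≤ R ^ (p + 2) :=
    sum_average_mulVec_rpow_le (eigenWeight_one_mem_doublyStochastic hC hA)
      (eigenWeight_one_mem_doublyStochastic hC hB) (fun _ ↦ abs_nonneg _) (fun _ ↦ abs_nonneg _)
      (by linarith) (sum_abs_eigenvalues_rpow_le hA hp0 hAR)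
      (sum_abs_eigenvalues_rpow_le hB hp0 hBR)
  have hholder := sum_mul_rpow_mul_rpow_le_of_mem_doublyStochastic (one_mem (doublyStochastic ℝ n))
    (fun k ↦ abs_nonneg (hC.eigenvalues k)) hμ two_pos hp0
  rw [add_comm 2 p, ← schattenNorm_rpow_of_isHermitian hC, Real.rpow_two] at hholder
  simp only [one_apply, ite_mul, one_mul, zero_mul, sum_ite_eq, mem_univ, if_true, Real.rpow_two]
    at hholder
  calc _ ≤ ∑ k, |hC.eigenvalues k| ^ 2 * μ k ^ p :=
        sum_eigenWeight_mul_midpoint_rpow_le_sum hA hB hC hp0 hp1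
    _ ≤ schattenNorm (p + 2) C ^ 2 * (∑ k, μ k ^ (p + 2)) ^ (p / (p + 2)) := hholder
    _ ≤ schattenNorm (p + 2) C ^ 2 * (R ^ (p + 2)) ^ (p / (p + 2)) := by
        have := sum_nonneg fun k (_ : k ∈ univ) ↦ Real.rpow_nonneg (hμ k) (p + 2)
        gcongr
    _ = schattenNorm (p + 2) C ^ 2 * R ^ p := by
        rw [← Real.rpow_mul hR, mul_div_cancel₀ _ (by positivity)]

lemma sum_eigenWeight_mul_hermiteHadamardMean_le (hA : A.IsHermitian) (hB : B.IsHermitian)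
    (hC : C.IsHermitian) (hp : 0 ≤ p) (hAR : schattenNorm (p + 2) A ≤ R)
    (hBR : schattenNorm (p + 2) B ≤ R) :
    ∑ i, ∑ j, eigenWeight hA hB C i j
        * hermiteHadamardMean p |hA.eigenvalues i| |hB.eigenvalues j|
      ≤ schattenNorm (p + 2) C ^ 2 * R ^ p := by
  unfold hermiteHadamardMean
  split_ifs with hp1
  · exact sum_eigenWeight_mul_midpoint_rpow_le hA hB hC hp hp1 hAR hBR
  · have hle {D : Matrix n n ℂ} (hDR : schattenNorm (p + 2) D ≤ R) :
        schattenNorm (p + 2) C ^ 2 * schattenNorm (p + 2) D ^ p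
          ≤ schattenNorm (p + 2) C ^ 2 * R ^ p := by
      have := schattenNorm_nonneg (p + 2) D
      gcongr
    simp only [mul_div_assoc', mul_add, ← sum_div, sum_add_distrib]
    linarith [sum_eigenWeight_mul_abs_rpow_left_le hA hB hC hp, hle hAR,
      sum_eigenWeight_mul_abs_rpow_right_le hA hB hC hp, hle hBR]

lemma re_trace_sub_mul_cfc_signedRpow_sub_le (hA : A.IsHermitian) (hB : B.IsHermitian) (hp : 0 ≤ p)
    (hAR : schattenNorm (p + 2) A ≤ R) (hBR : schattenNorm (p + 2) B ≤ R) :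
    (trace ((A - B) * (cfc (signedRpow p) A - cfc (signedRpow p) B))).re
      ≤ (p + 1) * schattenNorm (p + 2) (A - B) ^ 2 * R ^ p := by
  have hmean := sum_eigenWeight_mul_hermiteHadamardMean_le hA hB (hA.sub hB) hp hAR hBR
  rw [trace_sub_mul_cfc_sub_cfc hA hB, Complex.ofReal_re, mul_assoc]
  refine le_trans ?_ (mul_le_mul_of_nonneg_left hmean (by positivity : 0 ≤ p + 1))
  simp only [mul_sum, eigenWeight_sub]
  refine sum_le_sum fun i _ ↦ sum_le_sum fun j _ ↦ ?_
  have hweight : 0 ≤ eigenWeight hA hB 1 i j := sq_nonneg _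
  have hscalar := mul_le_mul_of_nonneg_left
    (sub_mul_signedRpow_sub_le hp (hA.eigenvalues i) (hB.eigenvalues j)) hweight
  linarith

end KeyEstimate

section HermitianCase

open Finset Matrix

variable {n : Type*} [Fintype n] [DecidableEq n] {X Y : Matrix n n ℂ} {p : ℝ}

lemma schattenNorm_le_schattenNorm_add (hX : X.IsHermitian) (hY : Y.IsHermitian) (hp : 0 ≤ p)
    (horth : (trace (Y * cfc (signedRpow p) X)).re = 0) :
    schattenNorm (p + 2) X ≤ schattenNorm (p + 2) (X + Y) := by
  have hholder := re_trace_mul_cfc_signedRpow_le (hX.add hY) hX hp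
  rw [Matrix.add_mul, trace_add, Complex.add_re, horth, add_zero,
    re_trace_mul_cfc_signedRpow_self hX hp] at hholder
  rcases (schattenNorm_nonneg (p + 2) X).eq_or_lt with hzero | hpos
  · rw [← hzero]
    exact schattenNorm_nonneg _ _
  · refine le_of_mul_le_mul_right ?_ (Real.rpow_pos_of_pos hpos (p + 1))
    rwa [mul_comm, ← Real.rpow_add_one hpos.ne', add_assoc, one_add_one_eq_two]

lemma isHermitian_add_ofReal_smul {m : Type*} {X Y : Matrix m m ℂ} (hX : X.IsHermitian)
    (hY : Y.IsHermitian) (t : ℝ) : (X + (t : ℂ) • Y).IsHermitian :=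
  hX.add (hY.smul (Complex.conj_ofReal t))

lemma re_trace_mul_cfc_signedRpow_add_smul_le (hX : X.IsHermitian) (hY : Y.IsHermitian)
    (hp : 0 ≤ p) (horth : (trace (Y * cfc (signedRpow p) X)).re = 0) {t : ℝ} (ht : 0 ≤ t) :
    (trace (Y * cfc (signedRpow p) (X + (t : ℂ) • Y))).re
      ≤ (p + 1) * schattenNorm (p + 2) Y ^ 2 * t * schattenNorm (p + 2) (X + (t : ℂ) • Y) ^ p := by
  have hZ := isHermitian_add_ofReal_smul hX hY t
  set Z := X + (t : ℂ) • Y with hZdef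
  rcases ht.eq_or_lt with rfl | ht
  · simp [hZdef, horth]
  have hXZ : schattenNorm (p + 2) X ≤ schattenNorm (p + 2) Z :=
    schattenNorm_le_schattenNorm_add hX (hY.smul (Complex.conj_ofReal t)) hp (by simp [horth])
  have hkey := re_trace_sub_mul_cfc_signedRpow_sub_le hZ hX hp le_rfl hXZ
  rw [show Z - X = (t : ℂ) • Y from add_sub_cancel_left _ _, Matrix.mul_sub,
    schattenNorm_smul (by positivity), Complex.norm_real, Real.norm_of_nonneg ht.le] at hkey
  simp only [Matrix.smul_mul, trace_sub, trace_smul, smul_eq_mul, Complex.sub_re,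
    Complex.re_ofReal_mul, horth, mul_zero, sub_zero] at hkey
  refine le_of_mul_le_mul_left (hkey.trans_eq ?_) ht
  ring

lemma rpow_mul_schattenNorm_mul_sub_le (hX : X.IsHermitian) (hY : Y.IsHermitian) (hp : 0 ≤ p) :
    schattenNorm (p + 2) X ^ p
        * (schattenNorm (p + 2) X * (schattenNorm (p + 2) X - schattenNorm (p + 2) Y))
      ≤ (trace ((X - Y) * cfc (signedRpow p) X)).re := by
  have hself := re_trace_mul_cfc_signedRpow_self hX hp
  have hholder := re_trace_mul_cfc_signedRpow_le hY hX hp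
  have hnonneg := schattenNorm_nonneg (p + 2) X
  rw [Matrix.sub_mul, trace_sub, Complex.sub_re, hself]
  rw [Real.rpow_add_one' hnonneg (by positivity)] at hholder
  rw [Real.rpow_add' hnonneg (by positivity), Real.rpow_two]
  linarith

lemma schattenNorm_add_smul_mul_sub_le (hX : X.IsHermitian) (hY : Y.IsHermitian) (hp : 0 ≤ p)
    (horth : (trace (Y * cfc (signedRpow p) X)).re = 0) {s t : ℝ} (ht : 0 ≤ t) (hst : s ≤ t) :
    schattenNorm (p + 2) (X + (t : ℂ) • Y)
        * (schattenNorm (p + 2) (X + (t : ℂ) • Y) - schattenNorm (p + 2) (X + (s : ℂ) • Y))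
      ≤ (p + 1) * schattenNorm (p + 2) Y ^ 2 * (t * (t - s)) := by
  have hincrement := rpow_mul_schattenNorm_mul_sub_le (isHermitian_add_ofReal_smul hX hY t)
    (isHermitian_add_ofReal_smul hX hY s) hp
  have hderiv := mul_le_mul_of_nonneg_left
    (re_trace_mul_cfc_signedRpow_add_smul_le hX hY hp horth ht) (sub_nonneg.2 hst)
  have hdiff : X + (t : ℂ) • Y - (X + (s : ℂ) • Y) = ((t - s : ℝ) : ℂ) • Y := by
    push_cast
    module
  rw [hdiff, Matrix.smul_mul, trace_smul, smul_eq_mul, Complex.re_ofReal_mul] at hincrement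
  rcases (schattenNorm_nonneg (p + 2) (X + (t : ℂ) • Y)).eq_or_lt with hzero | hpos
  · rw [← hzero, zero_mul]
    have := sub_nonneg.2 hst
    positivity
  · refine le_of_mul_le_mul_left ((hincrement.trans hderiv).trans_eq ?_)
      (Real.rpow_pos_of_pos hpos p)
    ring

theorem schattenNorm_add_sq_le_of_isHermitian (hX : X.IsHermitian) (hY : Y.IsHermitian)
    (hp : 0 ≤ p) (horth : (trace (Y * cfc (signedRpow p) X)).re = 0) :
    schattenNorm (p + 2) (X + Y) ^ 2
      ≤ schattenNorm (p + 2) X ^ 2 + (p + 1) * schattenNorm (p + 2) Y ^ 2 := by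
  set N : ℝ → ℝ := fun t ↦ schattenNorm (p + 2) (X + (t : ℂ) • Y) with hN
  set K := (p + 1) * schattenNorm (p + 2) Y ^ 2
  have hanti : AntitoneOn (fun t ↦ N t ^ 2 - K * t ^ 2) (Set.Ici 0) := by
    refine antitoneOn_of_sub_le_mul_sq (K := K) fun s _ t ht hst ↦ ?_
    have hle : N t * (N t - N s) ≤ K * (t * (t - s)) :=
      schattenNorm_add_smul_mul_sub_le hX hY hp horth ht hst
    linarith [sq_nonneg (N t - N s)]
  have h := hanti Set.self_mem_Ici (Set.mem_Ici.2 zero_le_one) zero_le_one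
  simp only [hN, Complex.ofReal_zero, zero_smul, add_zero, Complex.ofReal_one, one_smul] at h
  linarith

end HermitianCase

section FiniteSpectrum

open Finset Matrix Polynomial

lemma cfc_eq_aeval_interpolate {𝒜 : Type*} [Ring 𝒜] [StarRing 𝒜] [TopologicalSpace 𝒜] [Algebra ℝ 𝒜]
    [ContinuousFunctionalCalculus ℝ 𝒜 IsSelfAdjoint] {a : 𝒜} (ha : IsSelfAdjoint a) (f : ℝ → ℝ)
    {s : Finset ℝ} (hs : spectrum ℝ a ⊆ s) :
    cfc f a = aeval a (Lagrange.interpolate s id f) := by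
  have heval : (spectrum ℝ a).EqOn f (Lagrange.interpolate s id f).eval := fun x hx ↦
    (Lagrange.eval_interpolate_at_node f Function.injective_id.injOn (hs hx)).symm
  rw [cfc_congr heval, cfc_polynomial _ a ha]

variable {m n : Type*} [Fintype m] [DecidableEq m] [Fintype n] [DecidableEq n]

lemma re_trace_mul_cfc_eq_zero {A B : Matrix n n ℂ} (hA : A.IsHermitian)
    (hAB : ∀ k : ℕ, (trace (B * A ^ k)).re = 0) (f : ℝ → ℝ) : (trace (B * cfc f A)).re = 0 := by
  rw [cfc_eq_aeval_interpolate hA.isSelfAdjoint f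
      (s := (finite_real_spectrum (A := A)).toFinset) (by simp), aeval_eq_sum_range, mul_sum,
    trace_sum, Complex.re_sum]
  refine sum_eq_zero fun k _ ↦ ?_
  rw [Matrix.mul_smul, trace_smul, Complex.smul_re, hAB, smul_zero]

lemma aeval_fromBlocks_diagonal {R α : Type*} [CommSemiring R] [Semiring α] [Algebra R α]
    (A : Matrix m m α) (D : Matrix n n α) (P : R[X]) :
    aeval (fromBlocks A 0 0 D) P = fromBlocks (aeval A P) 0 0 (aeval D P) := by
  induction P using Polynomial.induction_on' with
  | add P Q hP hQ => simp only [map_add, hP, hQ, fromBlocks_add, add_zero]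
  | monomial k a =>
    simp only [aeval_monomial, ← Algebra.smul_def, fromBlocks_diagonal_pow, fromBlocks_smul,
      smul_zero]

lemma cfc_fromBlocks_diagonal {A : Matrix m m ℂ} {D : Matrix n n ℂ} (hA : A.IsHermitian)
    (hD : D.IsHermitian) (f : ℝ → ℝ) :
    cfc f (fromBlocks A 0 0 D) = fromBlocks (cfc f A) 0 0 (cfc f D) := by
  classical
  have hblocks : (fromBlocks A 0 0 D).IsHermitian := hA.fromBlocks (by simp) hD
  set s := (finite_real_spectrum (A := A)).toFinset ∪ (finite_real_spectrum (A := D)).toFinset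
    ∪ (finite_real_spectrum (A := fromBlocks A 0 0 D)).toFinset with hs
  rw [cfc_eq_aeval_interpolate hA.isSelfAdjoint f (s := s) fun x hx ↦ by simp [hs, hx],
    cfc_eq_aeval_interpolate hD.isSelfAdjoint f (s := s) fun x hx ↦ by simp [hs, hx],
    cfc_eq_aeval_interpolate hblocks.isSelfAdjoint f (s := s) fun x hx ↦ by simp [hs, hx],
    aeval_fromBlocks_diagonal]

end FiniteSpectrum

section HermitianDilation

open Finset Matrix

/-- The Hermitian dilation of a square matrix `A`; its eigenvalues are `±` the singular values of
`A`. -/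
def hermitianDilation {n : Type*} (A : Matrix n n ℂ) : Matrix (n ⊕ n) (n ⊕ n) ℂ :=
  fromBlocks 0 A Aᴴ 0

lemma isHermitian_hermitianDilation {n : Type*} (A : Matrix n n ℂ) :
    (hermitianDilation A).IsHermitian :=
  isHermitian_zero.fromBlocks rfl isHermitian_zero

lemma hermitianDilation_add {n : Type*} (A B : Matrix n n ℂ) :
    hermitianDilation (A + B) = hermitianDilation A + hermitianDilation B := by
  simp only [hermitianDilation, fromBlocks_add, conjTranspose_add, add_zero]

variable {n : Type*} [Fintype n] [DecidableEq n]

lemma schattenNorm_hermitianDilation (q : ℝ) (A : Matrix n n ℂ) :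
    schattenNorm q (hermitianDilation A) = 2 ^ (1 / q) * schattenNorm q A := by
  have hA := isHermitian_conjTranspose_mul_self A
  have hcharpoly : ((hermitianDilation A)ᴴ * hermitianDilation A).charpoly
      = ∏ i, (Polynomial.X
          - Polynomial.C ((Sum.elim hA.eigenvalues hA.eigenvalues i : ℝ) : ℂ)) := by
    rw [(isHermitian_hermitianDilation A).eq, hermitianDilation, fromBlocks_multiply]
    simp only [Matrix.zero_mul, Matrix.mul_zero, zero_add, add_zero]
    rw [charpoly_fromBlocks_zero₁₂, charpoly_mul_comm, hA.charpoly_eq, Fintype.prod_sum_type]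
    rfl
  have hnonneg : 0 ≤ ∑ i, hA.eigenvalues i ^ (q / 2) :=
    sum_nonneg fun i _ ↦ Real.rpow_nonneg (eigenvalues_conjTranspose_mul_self_nonneg A i) _
  rw [schattenNorm_of_charpoly_eq hcharpoly, Fintype.sum_sum_type]
  simp only [Sum.elim_inl, Sum.elim_inr]
  rw [← two_mul, Real.mul_rpow two_pos.le hnonneg, schattenNorm]

lemma cfc_signedRpow_hermitianDilation {p : ℝ} (A : Matrix n n ℂ) :
    cfc (signedRpow p) (hermitianDilation A)
      = fromBlocks 0 (A * cfc (fun x : ℝ ↦ x ^ (p / 2)) (Aᴴ * A))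
          (Aᴴ * cfc (fun x : ℝ ↦ x ^ (p / 2)) (A * Aᴴ)) 0 := by
  have hsq : hermitianDilation A ^ 2 = fromBlocks (A * Aᴴ) 0 0 (Aᴴ * A) := by
    simp [sq, hermitianDilation, fromBlocks_multiply]
  have hsigned : signedRpow p = fun x ↦ x * (x ^ 2) ^ (p / 2) := by
    ext x
    rw [signedRpow, ← sq_abs, ← Real.rpow_natCast_mul (abs_nonneg x)]
    ring_nf
  rw [hsigned, cfc_self_mul_of_isHermitian (isHermitian_hermitianDilation A),
    cfc_comp_pow (fun x : ℝ ↦ x ^ (p / 2)) 2 (hermitianDilation A)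
      ((finite_real_spectrum.image _).continuousOn _)
      (isHermitian_hermitianDilation A).isSelfAdjoint,
    hsq, cfc_fromBlocks_diagonal (isHermitian_mul_conjTranspose_self A)
      (isHermitian_conjTranspose_mul_self A), hermitianDilation, fromBlocks_multiply]
  simp

lemma re_trace_hermitianDilation_mul_cfc_signedRpow {p : ℝ} (A B : Matrix n n ℂ) :
    (trace (hermitianDilation B * cfc (signedRpow p) (hermitianDilation A))).re
      = 2 * (trace (Bᴴ * A * cfc (fun x : ℝ ↦ x ^ (p / 2)) (Aᴴ * A))).re := by
  have hherm : (cfc (signedRpow p) (hermitianDilation A)).IsHermitian :=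
    (cfc_predicate _ _ : IsSelfAdjoint _)
  rw [cfc_signedRpow_hermitianDilation, isHermitian_fromBlocks_iff] at hherm
  set G := A * cfc (fun x : ℝ ↦ x ^ (p / 2)) (Aᴴ * A)
  have hconj : trace (B * Gᴴ) = star (trace (Bᴴ * G)) := by
    rw [← trace_conjTranspose, conjTranspose_mul Bᴴ, conjTranspose_conjTranspose, trace_mul_comm]
  rw [cfc_signedRpow_hermitianDilation, ← hherm.2.1, hermitianDilation, fromBlocks_multiply]
  have htrace : trace (fromBlocks (B * Gᴴ) 0 0 (Bᴴ * G)) = trace (B * Gᴴ) + trace (Bᴴ * G) := by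
    simp [trace, Fintype.sum_sum_type]
  simp only [Matrix.zero_mul, Matrix.mul_zero, zero_add, add_zero, Matrix.mul_assoc]
  rw [htrace, hconj, Complex.add_re, Complex.star_def, Complex.conj_re, two_mul]

end HermitianDilation

open Matrix in
theorem uniform_smoothness_subsystem_general {n : Type*} [Fintype n] [DecidableEq n]
    (X Y : Matrix n n ℂ) (q : ℝ) (hq : 2 ≤ q)
    (hXY : (trace (Yᴴ * X * cfc (fun x : ℝ ↦ x ^ ((q - 2) / 2)) (Xᴴ * X))).re = 0) :
    schattenNorm q (X + Y) ^ 2 ≤ schattenNorm q X ^ 2 + (q - 1) * schattenNorm q Y ^ 2 := by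
  have horth : (trace (hermitianDilation Y *
      cfc (signedRpow (q - 2)) (hermitianDilation X))).re = 0 := by
    rw [re_trace_hermitianDilation_mul_cfc_signedRpow, hXY, mul_zero]
  have hdil := schattenNorm_add_sq_le_of_isHermitian (isHermitian_hermitianDilation X)
    (isHermitian_hermitianDilation Y) (sub_nonneg.2 hq) horth
  rw [← hermitianDilation_add, sub_add_cancel, show q - 2 + 1 = q - 1 by ring] at hdil
  simp only [schattenNorm_hermitianDilation, mul_pow] at hdil
  refine le_of_mul_le_mul_left (hdil.trans_eq ?_) (by positivity : 0 < ((2 : ℝ) ^ (1 / q)) ^ 2)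
  ring

section PartialTrace

open Finset Matrix

lemma ptraceRight_conjTranspose {J I : Type*} [Fintype I] (Y : Matrix (J × I) (J × I) ℂ) :
    ptraceRight Yᴴ = (ptraceRight Y)ᴴ := by
  ext a b
  simp [ptraceRight]

lemma trace_mul_kronecker_one {J I : Type*} [Fintype J] [Fintype I] [DecidableEq I]
    (Y : Matrix (J × I) (J × I) ℂ) (Z : Matrix J J ℂ) :
    trace (Y * (Z ⊗ₖ (1 : Matrix I I ℂ))) = trace (ptraceRight Y * Z) := by
  simp only [ptraceRight, trace, diag_apply, mul_apply, Fintype.sum_prod_type, kroneckerMap_apply,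
    one_apply, of_apply, mul_ite, mul_one, mul_zero, sum_ite_eq', mem_univ, if_true, sum_mul]
  exact sum_congr rfl fun a _ ↦ sum_comm

lemma mul_pow_kronecker_one {J I R : Type*} [Fintype J] [Fintype I] [DecidableEq J] [DecidableEq I]
    [CommSemiring R] (Z W : Matrix J J R) (k : ℕ) :
    Z ⊗ₖ (1 : Matrix I I R) * (W ⊗ₖ (1 : Matrix I I R)) ^ k = (Z * W ^ k) ⊗ₖ 1 := by
  induction k with
  | zero => simp
  | succ k ih => rw [pow_succ, ← Matrix.mul_assoc, ih, ← mul_kronecker_mul, Matrix.mul_one,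
      pow_succ, Matrix.mul_assoc]

end PartialTrace

/-- **Uniform smoothness for a subsystem.** If `Tr_i(Y) = 0` and `X = X_j ⊗ I_i`, then for
`q ≥ 2`, `‖X + Y‖_q² ≤ ‖X‖_q² + (q−1)·‖Y‖_q²`. -/
theorem uniform_smoothness_subsystem
    {J I : Type*} [Fintype J] [Fintype I] [DecidableEq J] [DecidableEq I]
    (X Y : Matrix (J × I) (J × I) ℂ)
    (Xj : Matrix J J ℂ) (hX : X = Xj ⊗ₖ (1 : Matrix I I ℂ))
    (hY : ptraceRight Y = 0)
    (q : ℝ) (hq : 2 ≤ q) :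
    schattenNorm q (X + Y) ^ 2 ≤ schattenNorm q X ^ 2 + (q - 1) * schattenNorm q Y ^ 2 := by
  have horth (k : ℕ) : (Matrix.trace (Yᴴ * X * (Xᴴ * X) ^ k)).re = 0 := by
    have hpow : X * (Xᴴ * X) ^ k = (Xj * (Xjᴴ * Xj) ^ k) ⊗ₖ (1 : Matrix I I ℂ) := by
      rw [hX, Matrix.conjTranspose_kronecker, Matrix.conjTranspose_one,
        ← Matrix.mul_kronecker_mul, Matrix.mul_one, mul_pow_kronecker_one]
    rw [Matrix.mul_assoc, hpow, trace_mul_kronecker_one, ptraceRight_conjTranspose, hY]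
    simp
  exact uniform_smoothness_subsystem_general X Y q hq <|
    re_trace_mul_cfc_eq_zero (Matrix.isHermitian_conjTranspose_mul_self X) horth _
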